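/- Identify ℝ^m with ℝ^{m−n} × ℝ^n and let e_1, …, e_n be the constant vector fields given by the standard basis vectors of the second factor. Let U ⊆ ℝ^m be open, let F be a smooth vector field on U, set W_i := [F, e_i], and assume: (a) the 2n vectors e_1(z), …, e_n(z), W_1(z), …, W_n(z) are linearly independent at every z ∈ U; (b) [e_i, W_j](z) and [W_i, W_j](z) lie in 𝒲_z := span{e_1(z), …, e_n(z), W_1(z), …, W_n(z)} for all z ∈ U and all i, j. Then for every z₀ ∈ U there exist an open neighbourhood U' ⊆ U of z₀, a smooth map A : U' → (n×n real matrices) with invertible values such that Ṽ_i := A_i^j e_j satisfy [Ṽ_i, Ṽ_j] = 0, and a smooth diffeomorphism φ from U' onto an open subset of ℝ^{m−2n} × ℝ^n × ℝ^n with smooth inverse, such that for all z ∈ U' and all i: Dφ(z)(Ṽ_i(z)) = (0, 0, ε_i) and Dφ(z)([F, Ṽ_i](z)) + (0, ε_i, 0) ∈ {0} × {0} × ℝ^n, where ε_i denotes the i-th standard basis vector of ℝ^n. -/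

import Mathlib

/-- The Lie bracket of two vector fields (as maps `E → E`), defined via the
Fréchet derivative: `[X,Y](z) = DY(z)(X(z)) − DX(z)(Y(z))`. -/
noncomputable def lieB {E : Type*} [NormedAddCommGroup E] [NormedSpace ℝ E]
    (X Y : E → E) : E → E :=
  fun z => fderiv ℝ Y z (X z) - fderiv ℝ X z (Y z)

/-- The constant vector field `∂/∂y^i` on `ℝ^{m−n} × ℝ^n` (here `p = m − n`). -/
def eVec (p n : ℕ) (i : Fin n) : (Fin p → ℝ) × (Fin n → ℝ) := (0, Pi.single i 1)

/-! The distribution `𝒲` spanned by the `e_α` and the `[F, e_β]` is involutive, so by Frobenius it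
is the kernel of the differential of a map `t`. Complete `t` to the coordinates `(t, x, y)` with
`x = π z₁` and `y = π F₁`, where `F₁` is the horizontal component of `F` and the linear map `π` is
chosen so that `M = π ∂F₁/∂y` is invertible. A vertical vector `v` goes to `(0, 0, M v)` and
`[F, e_v]` to `(0, -M v, *)`, so the fields `Ṽ = M⁻¹ ε` have the required form. They commute because
a diffeomorphism makes them constant.

For Frobenius, normalise the frame by a linear projection of `𝒲`: its brackets then project to `0`,
so the frame commutes. Its joint flow is obtained by solving `γ' = Y(γ) h` with the inverse function
theorem on pairs `(h, γ)`, where `γ` is a path on `[0, 1]`. -/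

open Set Filter Topology VectorField
open scoped ContDiff unitInterval

universe u

section LocalDiffeomorphism

variable {E F : Type*} [NormedAddCommGroup E] [NormedSpace ℝ E]
  [NormedAddCommGroup F] [NormedSpace ℝ F]

/-- A local diffeomorphism between open subsets of two normed spaces, encoded as an open partial
homeomorphism that is smooth in both directions. -/
def IsSmoothDiffeo (e : OpenPartialHomeomorph E F) : Prop :=
  ContDiffOn ℝ ∞ e e.source ∧ ContDiffOn ℝ ∞ e.symm e.target

namespace IsSmoothDiffeo

variable {e : OpenPartialHomeomorph E F}

theorem symm (he : IsSmoothDiffeo e) : IsSmoothDiffeo e.symm :=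
  ⟨he.2, he.1⟩

theorem contDiffAt (he : IsSmoothDiffeo e) {x : E} (hx : x ∈ e.source) : ContDiffAt ℝ ∞ e x :=
  he.1.contDiffAt (e.open_source.mem_nhds hx)

theorem differentiableAt (he : IsSmoothDiffeo e) {x : E} (hx : x ∈ e.source) :
    DifferentiableAt ℝ e x :=
  (he.contDiffAt hx).differentiableAt (by simp)

theorem fderiv_symm_fderiv (he : IsSmoothDiffeo e) {x : E} (hx : x ∈ e.source) (v : E) :
    fderiv ℝ e.symm (e x) (fderiv ℝ e x v) = v := by
  have hleft : e.symm ∘ e =ᶠ[𝓝 x] id := e.eventually_left_inverse hx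
  have hcomp := fderiv_comp x (he.symm.differentiableAt (e.map_source hx)) (he.differentiableAt hx)
  rw [hleft.fderiv_eq, fderiv_id] at hcomp
  exact (DFunLike.congr_fun hcomp v).symm

theorem injective_fderiv (he : IsSmoothDiffeo e) {x : E} (hx : x ∈ e.source) :
    Function.Injective (fderiv ℝ e x) :=
  Function.LeftInverse.injective (he.fderiv_symm_fderiv hx)

end IsSmoothDiffeo

theorem exists_isSmoothDiffeo_of_isInvertible_fderiv [CompleteSpace E] {f : E → F} {a : E}
    {s : Set E} (hs : s ∈ 𝓝 a) (hf : ∀ᶠ x in 𝓝 a, ContDiffAt ℝ ∞ f x)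
    (hfa : (fderiv ℝ f a).IsInvertible) :
    ∃ e : OpenPartialHomeomorph E F, IsSmoothDiffeo e ∧ ⇑e = f ∧ a ∈ e.source ∧ e.source ⊆ s := by
  obtain ⟨L, hL⟩ := hfa
  have hfa : ContDiffAt ℝ ∞ f a := hf.self_of_nhds
  have hf' : HasFDerivAt f (L : E →L[ℝ] F) a := hL ▸ (hfa.differentiableAt (by simp)).hasFDerivAt
  have hinv : ∀ᶠ x in 𝓝 a, (fderiv ℝ f x).IsInvertible :=
    (hfa.fderiv_right (m := 0) (by simp)).continuousAt (hL ▸ L.nhds)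
  obtain ⟨t, ht, hto, hat⟩ := eventually_nhds_iff.1 (hf.and (hinv.and hs))
  let e := (hfa.toOpenPartialHomeomorph f hf' (by simp)).restrOpen t hto
  have hsub : e.source ⊆ t := fun _ hx => hx.2
  refine ⟨e, ⟨fun x hx => (ht x (hsub hx)).1.contDiffWithinAt, fun y hy => ?_⟩, rfl,
    ⟨hfa.mem_toOpenPartialHomeomorph_source hf' (by simp), hat⟩, fun x hx => (ht x (hsub hx)).2.2⟩
  obtain ⟨hsmooth, ⟨L', hL'⟩, -⟩ := ht _ (hsub (e.map_target hy))
  refine (e.contDiffAt_symm (f₀' := L') hy ?_ hsmooth).contDiffWithinAt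
  exact hL' ▸ (hsmooth.differentiableAt (by simp)).hasFDerivAt

end LocalDiffeomorphism

section Superposition

variable {K : Type*} [TopologicalSpace K] [CompactSpace K]

/-- Pointwise application of a continuous family of operators to a continuous family of vectors,
as a continuous bilinear map. -/
noncomputable def pointwiseApplyL (K E F : Type*) [TopologicalSpace K] [CompactSpace K]
    [NormedAddCommGroup E] [NormedSpace ℝ E] [NormedAddCommGroup F] [NormedSpace ℝ F] :
    C(K, E →L[ℝ] F) →L[ℝ] C(K, E) →L[ℝ] C(K, F) :=
  LinearMap.mkContinuous₂
    (LinearMap.mk₂ ℝ (fun (a : C(K, E →L[ℝ] F)) (v : C(K, E)) =>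
      (⟨fun s => a s (v s), by fun_prop⟩ : C(K, F)))
      (fun _ _ _ => by ext; simp) (fun _ _ _ => by ext; simp)
      (fun _ _ _ => by ext; simp) (fun _ _ _ => by ext; simp)) 1 fun a v => by
    rw [one_mul]
    refine (ContinuousMap.norm_le _ (by positivity)).2 fun s => ?_
    exact (a s).le_of_opNorm_le_of_le (a.norm_coe_le_norm s) (v.norm_coe_le_norm s)

@[simp]
theorem pointwiseApplyL_apply {E F : Type*} [NormedAddCommGroup E] [NormedSpace ℝ E]
    [NormedAddCommGroup F] [NormedSpace ℝ F] (a : C(K, E →L[ℝ] F)) (v : C(K, E)) (s : K) :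
    pointwiseApplyL K E F a v s = a s (v s) := rfl

theorem hasFDerivAt_continuousMap_comp {E F : Type*} [NormedAddCommGroup E] [NormedSpace ℝ E]
    [NormedAddCommGroup F] [NormedSpace ℝ F] {f : C(E, F)} {f' : C(E, E →L[ℝ] F)}
    (hf : ∀ x, HasFDerivAt f (f' x) x) (γ : C(K, E)) :
    HasFDerivAt (fun γ : C(K, E) => f.comp γ) (pointwiseApplyL K E F (f'.comp γ)) γ := by
  rw [hasFDerivAt_iff_isLittleO, Asymptotics.isLittleO_iff]
  intro ε hε
  obtain ⟨δ, hδ, hball⟩ := (Metric.continuousAt_iff (α := C(K, E)) (β := C(K, E →L[ℝ] F))).1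
    (f'.continuous_postcomp (X := K)).continuousAt ε hε
  filter_upwards [Metric.ball_mem_nhds γ hδ] with γ' hγ'
  refine (ContinuousMap.norm_le _ (by positivity)).2 fun s => ?_
  have hseg : ∀ x ∈ segment ℝ (γ s) (γ' s), ‖f' x - f' (γ s)‖ ≤ ε := by
    rw [segment_eq_image_lineMap]
    rintro _ ⟨r, hr, rfl⟩
    have hmem : AffineMap.lineMap γ γ' r ∈ Metric.ball γ δ :=
      (convex_ball γ δ).lineMap_mem (Metric.mem_ball_self hδ) hγ' hr
    have hdist := (ContinuousMap.dist_apply_le_dist s).trans (hball hmem).le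
    simpa [dist_eq_norm, AffineMap.lineMap_apply] using hdist
  have hmvt := (convex_segment (γ s) (γ' s)).norm_image_sub_le_of_norm_hasFDerivWithin_le'
    (fun x _ => (hf x).hasFDerivWithinAt) hseg (left_mem_segment ℝ _ _) (right_mem_segment ℝ _ _)
  exact hmvt.trans (by gcongr; exact (γ' - γ).norm_coe_le_norm s)

theorem contDiff_continuousMap_comp_nat {E : Type u} [NormedAddCommGroup E] [NormedSpace ℝ E]
    (n : ℕ) : ∀ {F : Type u} [NormedAddCommGroup F] [NormedSpace ℝ F] {f : C(E, F)},
      ContDiff ℝ n f → ContDiff ℝ n fun γ : C(K, E) => f.comp γ := by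
  induction n with
  | zero => exact fun _ => contDiff_zero.2 (ContinuousMap.continuous_postcomp _)
  | succ n ih =>
    intro F _ _ f hf
    rw [Nat.cast_succ] at hf ⊢
    obtain ⟨hdiff, -, hf'⟩ := contDiff_succ_iff_fderiv.1 hf
    exact contDiff_succ_iff_hasFDerivAt.2 ⟨_,
      (pointwiseApplyL K E F).contDiff.comp (ih (f := ⟨fderiv ℝ f, hf'.continuous⟩) hf'),
      hasFDerivAt_continuousMap_comp fun x => (hdiff x).hasFDerivAt⟩

theorem contDiff_continuousMap_comp {E F : Type u} [NormedAddCommGroup E] [NormedSpace ℝ E]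
    [NormedAddCommGroup F] [NormedSpace ℝ F] {f : C(E, F)} (hf : ContDiff ℝ ∞ f) :
    ContDiff ℝ ∞ fun γ : C(K, E) => f.comp γ :=
  contDiff_infty.2 fun n => contDiff_continuousMap_comp_nat n (contDiff_infty.1 hf n)

end Superposition

section Primitive

variable {E : Type*} [NormedAddCommGroup E] [NormedSpace ℝ E]

/-- The primitive vanishing at `0` of a continuous function on the unit interval, as a continuous
linear map. -/
noncomputable def primitiveL (E : Type*) [NormedAddCommGroup E] [NormedSpace ℝ E] :
    C(I, E) →L[ℝ] C(I, E) :=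
  LinearMap.mkContinuous
    { toFun := fun v => ⟨fun s => ∫ r in (0 : ℝ)..s, IccExtend zero_le_one v r,
        (intervalIntegral.continuous_primitive
          (fun _ _ => v.continuous.Icc_extend'.intervalIntegrable _ _) 0).comp
          continuous_subtype_val⟩
      map_add' := fun v w => by
        ext s
        exact intervalIntegral.integral_add (v.continuous.Icc_extend'.intervalIntegrable _ _)
          (w.continuous.Icc_extend'.intervalIntegrable _ _)
      map_smul' := fun c v => by
        ext s
        exact intervalIntegral.integral_smul c _ } 1 fun v => by
    rw [one_mul]
    refine (ContinuousMap.norm_le _ (by positivity)).2 fun s => ?_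
    refine (intervalIntegral.norm_integral_le_of_norm_le_const (C := ‖v‖)
      fun r _ => v.norm_coe_le_norm _).trans ?_
    rw [sub_zero, abs_of_nonneg s.2.1]
    exact mul_le_of_le_one_right (norm_nonneg _) s.2.2

variable [CompleteSpace E]

theorem exists_hasDerivAt_primitiveL (v : C(I, E)) :
    ∃ g : ℝ → E, ∀ s : I, g s = primitiveL E v s ∧ HasDerivAt g (v s) s := by
  have hv : Continuous (IccExtend zero_le_one v : ℝ → E) := v.continuous.Icc_extend'
  refine ⟨fun s => ∫ r in (0 : ℝ)..s, IccExtend zero_le_one v r, fun s => ⟨rfl, ?_⟩⟩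
  have hderiv := intervalIntegral.integral_hasDerivAt_right (hv.intervalIntegrable 0 s)
    (hv.stronglyMeasurableAtFilter _ _) hv.continuousAt
  rwa [IccExtend_val] at hderiv

theorem primitiveL_apply_of_hasDerivAt {g : ℝ → E} {v : C(I, E)}
    (hg : ∀ s : I, HasDerivAt g (v s) s) (s : I) : primitiveL E v s = g s - g 0 := by
  refine intervalIntegral.integral_eq_sub_of_hasDerivAt (fun r hr => ?_)
    (v.continuous.Icc_extend'.intervalIntegrable _ _)
  rw [uIcc_of_le s.2.1] at hr
  have hrI : r ∈ I := ⟨hr.1, hr.2.trans s.2.2⟩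
  rw [IccExtend_of_mem _ _ hrI]
  exact hg ⟨r, hrI⟩

end Primitive

section Flow

variable {E H : Type*} [NormedAddCommGroup E] [NormedSpace ℝ E]
  [NormedAddCommGroup H] [NormedSpace ℝ H]

/-- The equation `γ' = Y(γ) h` as a nonlinear operator on pairs `(h, γ)`: a curve `γ` solves it with
`γ(0) = p` exactly when `(h, γ)` is mapped to `h` together with the constant curve `p`. The first
component is carried along so that the inverse function theorem applies. -/
noncomputable def odeResidual (Y : C(E, H →L[ℝ] E)) (x : H × C(I, E)) : H × C(I, E) :=
  (x.1, x.2 - primitiveL E (pointwiseApplyL I H E (Y.comp x.2) (.const I x.1)))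

@[simp]
theorem odeResidual_zero_left (Y : C(E, H →L[ℝ] E)) (γ : C(I, E)) :
    odeResidual Y (0, γ) = (0, γ) := by
  simp [odeResidual]

theorem contDiff_odeResidual {E H : Type u} [NormedAddCommGroup E] [NormedSpace ℝ E]
    [NormedAddCommGroup H] [NormedSpace ℝ H] {Y : C(E, H →L[ℝ] E)} (hY : ContDiff ℝ ∞ Y) :
    ContDiff ℝ ∞ (odeResidual Y) := by
  have hcomp : ContDiff ℝ ∞ fun x : H × C(I, E) => Y.comp x.2 :=
    (contDiff_continuousMap_comp (K := I) hY).comp contDiff_snd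
  have happly := (pointwiseApplyL I H E).isBoundedBilinearMap.contDiff.comp
    (hcomp.prodMk ((ContinuousLinearMap.const ℝ I).contDiff.comp contDiff_fst))
  exact contDiff_fst.prodMk (contDiff_snd.sub ((primitiveL E).contDiff.comp happly))

theorem fderiv_odeResidual_apply {Y : C(E, H →L[ℝ] E)} (hY : ContDiff ℝ 1 Y) (h w : H)
    (γ η : C(I, E)) :
    fderiv ℝ (odeResidual Y) (h, γ) (w, η) =
      (w, η - primitiveL E (pointwiseApplyL I H E (Y.comp γ) (.const I w) +
        pointwiseApplyL I H E (pointwiseApplyL I E (H →L[ℝ] E)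
          ((⟨fderiv ℝ Y, hY.continuous_fderiv one_ne_zero⟩ : C(E, E →L[ℝ] H →L[ℝ] E)).comp γ) η)
          (.const I h))) := by
  have hcomp := hasFDerivAt_continuousMap_comp
    (f' := ⟨fderiv ℝ Y, hY.continuous_fderiv one_ne_zero⟩)
    (fun z => (hY.differentiable one_ne_zero z).hasFDerivAt) γ
  have hYγ := HasFDerivAt.comp (f := Prod.snd) (h, γ) hcomp hasFDerivAt_snd
  have happly := (pointwiseApplyL I H E).hasFDerivAt_of_bilinear hYγ
    ((ContinuousLinearMap.const ℝ I).hasFDerivAt.comp (h, γ) hasFDerivAt_fst)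
  have hres : HasFDerivAt (odeResidual Y) _ (h, γ) :=
    hasFDerivAt_fst.prodMk (hasFDerivAt_snd.sub ((primitiveL E).hasFDerivAt.comp (h, γ) happly))
  rw [hres.fderiv]
  rfl

theorem isInvertible_fderiv_odeResidual {Y : C(E, H →L[ℝ] E)} (hY : ContDiff ℝ 1 Y) (γ : C(I, E)) :
    (fderiv ℝ (odeResidual Y) (0, γ)).IsInvertible := by
  let P : H →L[ℝ] C(I, E) := primitiveL E ∘L pointwiseApplyL I H E (Y.comp γ) ∘L .const ℝ I
  have hP : ∀ w, P w = primitiveL E (pointwiseApplyL I H E (Y.comp γ) (.const I w)) := fun _ => rfl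
  refine ⟨ContinuousLinearEquiv.skewProd (.refl ℝ H) (.refl ℝ C(I, E)) (-P), ?_⟩
  refine ContinuousLinearMap.ext fun ⟨w, η⟩ => ?_
  rw [fderiv_odeResidual_apply hY]
  simp [hP, ContinuousLinearEquiv.skewProd_apply, sub_eq_add_neg]

theorem lieBracket_clm_apply_const {Y : E → H →L[ℝ] E} {z : E} (hY : DifferentiableAt ℝ Y z)
    (v w : H) :
    lieBracket ℝ (fun x => Y x v) (fun x => Y x w) z =
      fderiv ℝ Y z (Y z v) w - fderiv ℝ Y z (Y z w) v := by
  simp only [lieBracket, fderiv_clm_apply hY (differentiableAt_const _)]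
  simp

/-- Commutativity of the fields turns `s • Y(γ(s)) w` into a solution of the equation linearised
along `γ`. -/
theorem fderiv_odeResidual_smul [CompleteSpace E] {Y : C(E, H →L[ℝ] E)}
    (hY : ContDiff ℝ 1 Y) {p : E} {h w : H} {γ η : C(I, E)}
    (hγ : odeResidual Y (h, γ) = (h, .const I p)) (hη : ∀ s : I, η s = (s : ℝ) • Y (γ s) w)
    (hcomm : ∀ s, lieBracket ℝ (fun x => Y x h) (fun x => Y x w) (γ s) = 0) :
    fderiv ℝ (odeResidual Y) (h, γ) (w, η) = (w, 0) := by
  obtain ⟨g, hg⟩ := exists_hasDerivAt_primitiveL (pointwiseApplyL I H E (Y.comp γ) (.const I h))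
  have hsolution : γ = .const I p + primitiveL E (pointwiseApplyL I H E (Y.comp γ) (.const I h)) :=
    sub_eq_iff_eq_add.1 (congrArg Prod.snd hγ)
  have hgγ : ∀ s : I, p + g s = γ s := fun s => by
    rw [(hg s).1]
    exact (DFunLike.congr_fun hsolution s).symm
  have hderiv : ∀ s : I, HasDerivAt (fun r : ℝ => r • Y (p + g r) w)
      ((s : ℝ) • fderiv ℝ Y (γ s) (Y (γ s) h) w + Y (γ s) w) s := fun s => by
    have hYg := (hY.differentiable one_ne_zero (p + g s)).hasFDerivAt.comp_hasDerivAt (s : ℝ)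
      ((hg s).2.const_add p)
    have hsmul := (hasDerivAt_id (s : ℝ)).smul (hYg.clm_apply (hasDerivAt_const (s : ℝ) w))
    exact hsmul.congr_deriv (by simp [hgγ])
  rw [fderiv_odeResidual_apply hY]
  refine Prod.ext rfl (sub_eq_zero.2 (ContinuousMap.ext fun s => ?_))
  rw [primitiveL_apply_of_hasDerivAt (g := fun r : ℝ => r • Y (p + g r) w)
    (fun s => ?_) s]
  · simp [hη, hgγ]
  · convert hderiv s using 1
    have hswap := sub_eq_zero.1 ((lieBracket_clm_apply_const
      (hY.differentiable one_ne_zero (γ s)) h w).symm.trans (hcomm s))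
    simp [hη, hswap, add_comm]

theorem fderiv_symm_odeResidual_apply_one [CompleteSpace E] {Y : C(E, H →L[ℝ] E)}
    (hY : ContDiff ℝ 1 Y) {e : OpenPartialHomeomorph (H × C(I, E)) (H × C(I, E))}
    (he : IsSmoothDiffeo e) (hcoe : ⇑e = odeResidual Y) {h : H} {p : E}
    (hmem : (h, .const I p) ∈ e.target) (w : H)
    (hcomm : ∀ s, lieBracket ℝ (fun x => Y x h) (fun x => Y x w)
      ((e.symm (h, .const I p)).2 s) = 0) :
    (fderiv ℝ e.symm (h, .const I p) (w, 0)).2 1 =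
      Y ((e.symm (h, .const I p)).2 1) w := by
  have hresidual := e.right_inv hmem
  have hfst : (e.symm (h, .const I p)).1 = h :=
    congrArg Prod.fst ((congrFun hcoe _).symm.trans hresidual)
  obtain ⟨γ, hγ⟩ : ∃ γ, e.symm (h, .const I p) = (h, γ) := ⟨_, Prod.ext hfst rfl⟩
  rw [hγ] at hresidual hcomm ⊢
  let η : C(I, E) := ⟨fun s => (s : ℝ) • Y (γ s) w, by fun_prop⟩
  have hlinearised : fderiv ℝ e (h, γ) (w, η) = (w, 0) := by
    rw [hcoe] at hresidual ⊢
    exact fderiv_odeResidual_smul hY hresidual (fun _ => rfl) hcomm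
  have hsymm := he.fderiv_symm_fderiv (hγ ▸ e.map_target hmem) (w, η)
  rw [hlinearised, hresidual] at hsymm
  simp [hsymm, η]

theorem exists_flow_of_lieBracket_eq_zero {E H : Type u} [NormedAddCommGroup E] [NormedSpace ℝ E]
    [NormedAddCommGroup H] [NormedSpace ℝ H] [CompleteSpace E] [CompleteSpace H]
    {Y : E → H →L[ℝ] E} (hY : ContDiff ℝ ∞ Y) {z₀ : E}
    (hcomm : ∀ᶠ z in 𝓝 z₀, ∀ v w, lieBracket ℝ (fun x => Y x v) (fun x => Y x w) z = 0) :
    ∃ Γ : H × E → E,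
      (∀ᶠ x in 𝓝 (0, z₀), ContDiffAt ℝ ∞ Γ x ∧ ∀ w, fderiv ℝ Γ x (w, 0) = Y (Γ x) w) ∧
      ∀ᶠ p in 𝓝 z₀, Γ (0, p) = p := by
  obtain ⟨O, hO, hOo, hz₀⟩ := eventually_nhds_iff.1 hcomm
  lift Y to C(E, H →L[ℝ] E) using hY.continuous
  have hY₁ : ContDiff ℝ 1 Y := hY.of_le (mod_cast le_top)
  have hs : {x : H × C(I, E) | MapsTo x.2 univ O} ∈ 𝓝 (0, .const I z₀) :=
    ((ContinuousMap.isOpen_setOfPred_mapsTo isCompact_univ hOo).preimage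
      continuous_snd).mem_nhds fun _ _ => hz₀
  obtain ⟨e, he, hcoe, hmem, hsub⟩ := exists_isSmoothDiffeo_of_isInvertible_fderiv hs
    (.of_forall fun x => (contDiff_odeResidual hY).contDiffAt)
    (isInvertible_fderiv_odeResidual hY₁ (.const I z₀))
  have hfix : ∀ γ, e (0, γ) = (0, γ) := fun γ => by rw [hcoe, odeResidual_zero_left]
  let j : H × E →L[ℝ] H × C(I, E) := (ContinuousLinearMap.id ℝ H).prodMap (.const ℝ I)
  let ev : H × C(I, E) →L[ℝ] E :=
    (ContinuousMap.evalCLM ℝ (1 : I)) ∘L ContinuousLinearMap.snd ℝ H C(I, E)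
  have htarget : ∀ᶠ x in 𝓝 (0, z₀), j x ∈ e.target :=
    j.continuous.continuousAt.eventually (e.open_target.mem_nhds
      (hfix (.const I z₀) ▸ e.map_source hmem : (0, .const I z₀) ∈ e.target))
  refine ⟨fun x => ev (e.symm (j x)), htarget.mono fun x hx => ?_, ?_⟩
  · have hsymm := he.symm.contDiffAt hx
    refine ⟨ev.contDiff.contDiffAt.comp _ (hsymm.comp _ j.contDiff.contDiffAt), fun w => ?_⟩
    have hΓ : HasFDerivAt (fun x => ev (e.symm (j x))) _ x := ev.hasFDerivAt.comp x
      ((hsymm.differentiableAt (by simp)).hasFDerivAt.comp x j.hasFDerivAt)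
    have hderiv := fderiv_symm_odeResidual_apply_one hY₁ he hcoe hx w
      fun s => hO _ (hsub (e.map_target hx) (mem_univ s)) x.1 w
    have hj : j (w, 0) = (w, 0) := by simp [j]
    rw [hΓ.fderiv]
    change (fderiv ℝ e.symm (j x) (j (w, 0))).2 1 = _
    rw [hj]
    exact hderiv
  · have hsource : ∀ᶠ p in 𝓝 z₀, (0, .const I p) ∈ e.source :=
      (continuous_const.prodMk (ContinuousLinearMap.const ℝ I).continuous).continuousAt.eventually
        (e.open_source.mem_nhds hmem)
    filter_upwards [hsource] with p hp
    have hjp : e.symm (j (0, p)) = (0, .const I p) :=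
      (congrArg e.symm (hfix _).symm).trans (e.left_inv hp)
    simp [hjp, ev]

end Flow

section Rectification

theorem exists_contDiff_eventuallyEq {E F : Type*} [NormedAddCommGroup E] [NormedSpace ℝ E]
    [HasContDiffBump E] [NormedAddCommGroup F] [NormedSpace ℝ F] {f : E → F} {a : E}
    (hf : ∀ᶠ x in 𝓝 a, ContDiffAt ℝ ∞ f x) : ∃ g : E → F, ContDiff ℝ ∞ g ∧ g =ᶠ[𝓝 a] f := by
  obtain ⟨r, hr, hball⟩ := Metric.eventually_nhds_iff_ball.1 hf
  let b : ContDiffBump a := ⟨r / 4, r / 2, by positivity, by linarith⟩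
  refine ⟨fun x => b x • f x, contDiff_iff_contDiffAt.2 fun x => ?_, ?_⟩
  · by_cases hx : x ∈ tsupport b
    · rw [b.tsupport_eq] at hx
      exact b.contDiffAt.smul (hball x (Metric.closedBall_subset_ball (half_lt_self hr) hx))
    · refine (contDiffAt_const (c := (0 : F))).congr_of_eventuallyEq ?_
      filter_upwards [notMem_tsupport_iff_eventuallyEq.1 hx] with y hy
      simp [hy]
  · filter_upwards [b.eventuallyEq_one] with x hx
    simp [hx]

variable {E H : Type u} {K : Type*} [NormedAddCommGroup E] [NormedSpace ℝ E] [CompleteSpace E]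
  [HasContDiffBump E] [NormedAddCommGroup H] [NormedSpace ℝ H] [CompleteSpace H]
  [NormedAddCommGroup K] [NormedSpace ℝ K]

theorem exists_fderiv_eq_of_lieBracket_eq_zero {Y : E → H →L[ℝ] E} {z₀ : E}
    (hY : ∀ᶠ z in 𝓝 z₀, ContDiffAt ℝ ∞ Y z)
    (hcomm : ∀ᶠ z in 𝓝 z₀, ∀ v w, lieBracket ℝ (fun x => Y x v) (fun x => Y x w) z = 0)
    (L : K × H →L[ℝ] E) (hL : ∀ w, L (0, w) = Y z₀ w) :
    ∃ ψ : K × H → E, ψ 0 = z₀ ∧ fderiv ℝ ψ 0 = L ∧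
      ∀ᶠ x in 𝓝 0, ContDiffAt ℝ ∞ ψ x ∧ ∀ w, fderiv ℝ ψ x (0, w) = Y (ψ x) w := by
  obtain ⟨g, hg, hgY⟩ := exists_contDiff_eventuallyEq hY
  have hgcomm : ∀ᶠ z in 𝓝 z₀, ∀ v w, lieBracket ℝ (fun x => g x v) (fun x => g x w) z = 0 := by
    filter_upwards [hcomm, hgY.eventuallyEq_nhds] with z hz hgz v w
    have happly : ∀ v, (fun x => g x v) =ᶠ[𝓝 z] fun x => Y x v := fun v =>
      hgz.fun_comp fun T : H →L[ℝ] E => T v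
    rw [(happly v).lieBracket_vectorField_eq (happly w), hz]
  obtain ⟨Γ, hΓ, hΓ₀⟩ := exists_flow_of_lieBracket_eq_zero hg hgcomm
  have hΓz₀ : Γ (0, z₀) = z₀ := hΓ₀.self_of_nhds
  let i : K × H →L[ℝ] H × E :=
    (ContinuousLinearMap.snd ℝ K H).prod
      (L.comp ((ContinuousLinearMap.inl ℝ K H).comp (ContinuousLinearMap.fst ℝ K H)))
  have hi : Tendsto (fun x => (0, z₀) + i x) (𝓝 0) (𝓝 (0, z₀)) :=
    (continuous_const.add i.continuous).tendsto' _ _ (by simp)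
  have hψ : ∀ x, ContDiffAt ℝ ∞ Γ ((0, z₀) + i x) →
      HasFDerivAt (fun x => Γ ((0, z₀) + i x)) (fderiv ℝ Γ ((0, z₀) + i x) ∘L i) x := fun x hx =>
    (hx.differentiableAt (by simp)).hasFDerivAt.comp x (i.hasFDerivAt.const_add _)
  refine ⟨fun x => Γ ((0, z₀) + i x), by simp [hΓz₀], ?_, ?_⟩
  · obtain ⟨hsmooth, hflow⟩ := hΓ.self_of_nhds
    have hinitial : ∀ k, fderiv ℝ Γ (0, z₀) (0, k) = k := fun k => by
      have hcomp := (hsmooth.differentiableAt (by simp)).hasFDerivAt.comp z₀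
        (hasFDerivAt_prodMk_right (0 : H) z₀)
      have hid := (hasFDerivAt_id (𝕜 := ℝ) z₀).congr_of_eventuallyEq hΓ₀
      exact DFunLike.congr_fun (hcomp.unique hid) k
    rw [(hψ 0 (by simpa using hsmooth)).fderiv]
    refine ContinuousLinearMap.ext fun ⟨k, w⟩ => ?_
    calc fderiv ℝ Γ ((0, z₀) + i 0) (i (k, w))
        = fderiv ℝ Γ (0, z₀) (w, 0) + fderiv ℝ Γ (0, z₀) (0, L (k, 0)) := by
          rw [map_zero, add_zero, ← map_add]
          simp [i]
      _ = L (0, w) + L (k, 0) := by rw [hflow, hinitial, hΓz₀, hgY.eq_of_nhds, hL]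
      _ = L (k, w) := by rw [← map_add]; simp
  · have hgΓ : ∀ᶠ x in 𝓝 (0, z₀), g (Γ x) = Y (Γ x) :=
      hΓ.self_of_nhds.1.continuousAt.eventually (hΓz₀.symm ▸ hgY)
    filter_upwards [hi.eventually hΓ, hi.eventually hgΓ] with x ⟨hsmooth, hflow⟩ hgx
    refine ⟨hsmooth.comp x (contDiffAt_const.add i.contDiff.contDiffAt), fun w => ?_⟩
    have hiw : i (0, w) = (w, 0) := Prod.ext rfl (map_zero L)
    rw [(hψ x hsmooth).fderiv, ← hgx, ← hflow, ← hiw, ContinuousLinearMap.comp_apply]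

theorem exists_isSmoothDiffeo_of_lieBracket_eq_zero [CompleteSpace K] {Y : E → H →L[ℝ] E} {z₀ : E}
    (hY : ∀ᶠ z in 𝓝 z₀, ContDiffAt ℝ ∞ Y z)
    (hcomm : ∀ᶠ z in 𝓝 z₀, ∀ v w, lieBracket ℝ (fun x => Y x v) (fun x => Y x w) z = 0)
    (L : (K × H) ≃L[ℝ] E) (hL : ∀ w, L (0, w) = Y z₀ w) :
    ∃ χ : OpenPartialHomeomorph E (K × H), IsSmoothDiffeo χ ∧ z₀ ∈ χ.source ∧
      ∀ z ∈ χ.source, ∀ w, fderiv ℝ χ z (Y z w) = (0, w) := by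
  obtain ⟨ψ, hψ₀, hψL, hψ⟩ :=
    exists_fderiv_eq_of_lieBracket_eq_zero hY hcomm (L : K × H →L[ℝ] E) hL
  obtain ⟨e, he, rfl, hmem, hsub⟩ := exists_isSmoothDiffeo_of_isInvertible_fderiv hψ
    (hψ.mono fun _ hx => hx.1) ⟨L, hψL.symm⟩
  refine ⟨e.symm, he.symm, hψ₀ ▸ e.map_source hmem, fun z hz w => ?_⟩
  have hx : e.symm z ∈ e.source := e.map_target hz
  simpa only [(hsub hx).2, e.right_inv hz] using he.fderiv_symm_fderiv hx (0, w)

end Rectification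

section Involutive

variable {E H : Type*} [NormedAddCommGroup E] [NormedSpace ℝ E] [NormedAddCommGroup H]
  [NormedSpace ℝ H]

/-- Involutivity at `z` of the distribution `x ↦ range (T x)` with frame `T`: brackets of frame
fields are tangent to it. Fields with variable coefficients then follow by the Leibniz rule. -/
def IsInvolutiveAt (T : E → H →L[ℝ] E) (z : E) : Prop :=
  ∀ v w, lieBracket ℝ (fun x => T x v) (fun x => T x w) z ∈ range (T z)

theorem fderiv_lieBracket_eq_zero_of_eventuallyEq_const {V W : E → E} {f : E → H} {z : E} {a b : H}
    (hf : ContDiffAt ℝ 2 f z) (hV : DifferentiableAt ℝ V z) (hW : DifferentiableAt ℝ W z)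
    (hfV : (fun x => fderiv ℝ f x (V x)) =ᶠ[𝓝 z] fun _ => a)
    (hfW : (fun x => fderiv ℝ f x (W x)) =ᶠ[𝓝 z] fun _ => b) :
    fderiv ℝ f z (lieBracket ℝ V W z) = 0 := by
  rw [fderiv_apply_lieBracket hf (by simp) hW hV, hfV.fderiv_eq, hfW.fderiv_eq]
  simp

theorem IsSmoothDiffeo.lieBracket_eq_zero {e : OpenPartialHomeomorph E H}
    (he : IsSmoothDiffeo e) {X Y : E → E} {z : E} {a b : H} (hz : z ∈ e.source)
    (hX : DifferentiableAt ℝ X z) (hY : DifferentiableAt ℝ Y z)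
    (heX : ∀ x ∈ e.source, fderiv ℝ e x (X x) = a) (heY : ∀ x ∈ e.source, fderiv ℝ e x (Y x) = b) :
    lieBracket ℝ X Y z = 0 := by
  have hsource := e.open_source.mem_nhds hz
  exact he.injective_fderiv hz ((fderiv_lieBracket_eq_zero_of_eventuallyEq_const
    ((he.contDiffAt hz).of_le (WithTop.coe_le_coe.2 le_top)) hX hY
    (mem_of_superset hsource heX) (mem_of_superset hsource heY)).trans (map_zero _).symm)

theorem lieBracket_clm_apply {T : E → H →L[ℝ] E} {a b : E → H} {z : E}
    (hT : DifferentiableAt ℝ T z) (ha : DifferentiableAt ℝ a z) (hb : DifferentiableAt ℝ b z) :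
    lieBracket ℝ (fun x => T x (a x)) (fun x => T x (b x)) z =
      lieBracket ℝ (fun x => T x (a z)) (fun x => T x (b z)) z +
        T z (fderiv ℝ b z (T z (a z)) - fderiv ℝ a z (T z (b z))) := by
  rw [lieBracket_clm_apply_const hT, lieBracket_eq]
  simp only [fderiv_clm_apply hT ha, fderiv_clm_apply hT hb, add_apply,
    ContinuousLinearMap.comp_apply, ContinuousLinearMap.flip_apply, map_sub]
  abel

theorem lieBracket_clm_apply_inverse_eq_zero {T : E → H →L[ℝ] E} {ρ : E →L[ℝ] H} {z : E}
    (hT : DifferentiableAt ℝ T z)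
    (hR : DifferentiableAt ℝ (fun x => (ρ ∘L T x).inverse) z)
    (hinvertible : ∀ᶠ x in 𝓝 z, (ρ ∘L T x).IsInvertible)
    (hinvolutive : IsInvolutiveAt T z) (v w : H) :
    lieBracket ℝ (fun x => T x ((ρ ∘L T x).inverse v)) (fun x => T x ((ρ ∘L T x).inverse w)) z
      = 0 := by
  have hR' : ∀ v, DifferentiableAt ℝ (fun x => (ρ ∘L T x).inverse v) z := fun v =>
    hR.clm_apply (differentiableAt_const v)
  have hdual : ∀ v, (fun x => fderiv ℝ ρ x (T x ((ρ ∘L T x).inverse v))) =ᶠ[𝓝 z] fun _ => v :=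
    fun v => hinvertible.mono fun x hx => by
      simpa only [ρ.fderiv, ContinuousLinearMap.comp_apply] using hx.self_apply_inverse v
  have hvertical := fderiv_lieBracket_eq_zero_of_eventuallyEq_const ρ.contDiff.contDiffAt
    (hT.clm_apply (hR' v)) (hT.clm_apply (hR' w)) (hdual v) (hdual w)
  obtain ⟨c, hc⟩ := hinvolutive ((ρ ∘L T z).inverse v) ((ρ ∘L T z).inverse w)
  rw [lieBracket_clm_apply hT (hR' v) (hR' w), ← hc, ← map_add] at hvertical ⊢
  rw [ρ.fderiv, ← ContinuousLinearMap.comp_apply] at hvertical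
  rw [(hinvertible.self_of_nhds.injective.eq_iff' (map_zero _)).1 hvertical, map_zero]

theorem eventually_isInvertible_and_contDiffAt_inverse [CompleteSpace H] {G : Type*}
    [NormedAddCommGroup G] [NormedSpace ℝ G] {M : E → H →L[ℝ] G} {z₀ : E}
    (hM : ∀ᶠ z in 𝓝 z₀, ContDiffAt ℝ ∞ M z) (hM₀ : (M z₀).IsInvertible) :
    ∀ᶠ z in 𝓝 z₀, (M z).IsInvertible ∧ ContDiffAt ℝ ∞ (fun x => (M x).inverse) z := by
  obtain ⟨f, hf⟩ := hM₀
  filter_upwards [hM, hM.self_of_nhds.continuousAt (hf ▸ ContinuousLinearEquiv.nhds f)]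
    with z hz (hinv : (M z).IsInvertible)
  exact ⟨hinv, hinv.contDiffAt_map_inverse.comp z hz⟩

theorem exists_continuousLinearEquiv_extending {K : Type*} [NormedAddCommGroup K] [NormedSpace ℝ K]
    [FiniteDimensional ℝ E] [FiniteDimensional ℝ H] [FiniteDimensional ℝ K] {T : H →L[ℝ] E}
    (hT : Function.Injective T)
    (hdim : Module.finrank ℝ K + Module.finrank ℝ H = Module.finrank ℝ E) :
    ∃ L : (K × H) ≃L[ℝ] E, ∀ w, L (0, w) = T w := by
  obtain ⟨C, hC⟩ := Submodule.exists_isCompl (LinearMap.range (T : H →ₗ[ℝ] E))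
  have hCdim : Module.finrank ℝ K = Module.finrank ℝ C := by
    have := Submodule.finrank_add_eq_of_isCompl hC
    rw [LinearMap.finrank_range_of_inj hT] at this
    omega
  let L := ((LinearEquiv.ofFinrankEq K C hCdim).prodCongr
    (LinearEquiv.ofInjective (T : H →ₗ[ℝ] E) hT)).trans (Submodule.prodEquivOfIsCompl C _ hC.symm)
  exact ⟨L.toContinuousLinearEquiv, fun w => by simp [L]⟩

end Involutive

section Frobenius

variable {E H : Type u} {K : Type*} [NormedAddCommGroup E] [NormedSpace ℝ E] [CompleteSpace E]
  [HasContDiffBump E] [NormedAddCommGroup H] [NormedSpace ℝ H] [CompleteSpace H]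
  [NormedAddCommGroup K] [NormedSpace ℝ K] [CompleteSpace K]

theorem exists_firstIntegrals_of_isInvolutiveAt {T : E → H →L[ℝ] E} {z₀ : E}
    (hT : ∀ᶠ z in 𝓝 z₀, ContDiffAt ℝ ∞ T z)
    (hinvolutive : ∀ᶠ z in 𝓝 z₀, IsInvolutiveAt T z)
    (L : (K × H) ≃L[ℝ] E) (hL : ∀ w, L (0, w) = T z₀ w) :
    ∃ t : E → K, ∀ᶠ z in 𝓝 z₀, ContDiffAt ℝ ∞ t z ∧
      ∀ δ, fderiv ℝ t z δ = 0 ↔ δ ∈ range (T z) := by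
  let ρ : E →L[ℝ] H := ContinuousLinearMap.snd ℝ K H ∘L (L.symm : E →L[ℝ] K × H)
  have hρ : ρ ∘L T z₀ = ContinuousLinearMap.id ℝ H :=
    ContinuousLinearMap.ext fun w => by simp [ρ, ← hL]
  have hR := eventually_isInvertible_and_contDiffAt_inverse (M := fun z => ρ ∘L T z)
    (hT.mono fun z hz => contDiffAt_const.clm_comp hz)
    (hρ ▸ ContinuousLinearMap.isInvertible_equiv (f := ContinuousLinearEquiv.refl ℝ H))
  obtain ⟨χ, hχ, hz₀, hχY⟩ := exists_isSmoothDiffeo_of_lieBracket_eq_zero (z₀ := z₀)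
    (Y := fun z => T z ∘L (ρ ∘L T z).inverse)
    (by filter_upwards [hT, hR] with z hz hRz using hz.clm_comp hRz.2)
    (by
      filter_upwards [hT, eventually_eventually_nhds.2 hR, hinvolutive] with z hz hRz hinv
      exact lieBracket_clm_apply_inverse_eq_zero (hz.differentiableAt (by simp))
        (hRz.self_of_nhds.2.differentiableAt (by simp)) (hRz.mono fun _ hx => hx.1) hinv)
    L (fun w => by rw [hρ, ContinuousLinearMap.inverse_id, hL]; rfl)
  refine ⟨fun z => (χ z).1, ?_⟩
  filter_upwards [χ.open_source.mem_nhds hz₀, hR] with z hz ⟨hinv, _⟩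
  have ht : HasFDerivAt (fun z => (χ z).1) _ z := (hχ.differentiableAt hz).hasFDerivAt.fst
  refine ⟨contDiffAt_fst.comp z (hχ.contDiffAt hz), fun δ => ?_⟩
  rw [ht.fderiv]
  constructor
  · intro hδ
    have hδY : fderiv ℝ χ z δ = (0, (fderiv ℝ χ z δ).2) := Prod.ext hδ rfl
    rw [← hχY z hz] at hδY
    exact ⟨_, (hχ.injective_fderiv hz hδY).symm⟩
  · rintro ⟨v, rfl⟩
    have hTv : T z ((ρ ∘L T z).inverse ((ρ ∘L T z) v)) = T z v :=
      congrArg (T z) (hinv.inverse_apply_self v)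
    rw [← hTv]
    exact congrArg Prod.fst (hχY z hz _)

end Frobenius

section Straightening

variable {B V Q : Type*} [NormedAddCommGroup B] [NormedSpace ℝ B] [NormedAddCommGroup V]
  [NormedSpace ℝ V] [NormedAddCommGroup Q] [NormedSpace ℝ Q]

/-- The frame `(α, β) ↦ e_α + [F, e_β]` of the distribution `𝒲` attached to a vector field `F` on
`B × V`, where `e_α = (0, α)` is a constant vertical field, so that `[F, e_β] = -DF (0, β)`. -/
noncomputable def bracketFrame (F : B × V → B × V) (z : B × V) : V × V →L[ℝ] B × V :=
  ContinuousLinearMap.inr ℝ B V ∘L ContinuousLinearMap.fst ℝ V V -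
    fderiv ℝ F z ∘L ContinuousLinearMap.inr ℝ B V ∘L ContinuousLinearMap.snd ℝ V V

/-- The vertical derivative `∂F₁/∂y` of the horizontal component `F₁` of a vector field `F` on
`B × V`, with `y` the coordinate of `V`. -/
noncomputable def verticalDeriv (F : B × V → B × V) (z : B × V) : V →L[ℝ] B :=
  ContinuousLinearMap.fst ℝ B V ∘L fderiv ℝ F z ∘L ContinuousLinearMap.inr ℝ B V

/-- The coordinates `(t, x, y)` built from first integrals `t` of `𝒲` and a linear projection `π` of
the horizontal directions: `x` is the projected position and `y` the projected velocity. -/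
def straightening (t : B × V → Q) (π : B →L[ℝ] V) (F : B × V → B × V) (z : B × V) : Q × V × V :=
  (t z, π z.1, π (F z).1)

theorem bracketFrame_apply (F : B × V → B × V) (z : B × V) (v : V × V) :
    bracketFrame F z v = (0, v.1) - fderiv ℝ F z (0, v.2) :=
  rfl

theorem bracketFrame_mk_zero (F : B × V → B × V) (z : B × V) (α : V) :
    bracketFrame F z (α, 0) = (0, α) := by
  simp [bracketFrame_apply, Prod.mk_zero_zero]

theorem contDiffAt_bracketFrame {F : B × V → B × V} {z : B × V} (hF : ContDiffAt ℝ ∞ F z) :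
    ContDiffAt ℝ ∞ (bracketFrame F) z :=
  contDiffAt_const.sub ((hF.fderiv_right (by simp)).clm_comp contDiffAt_const)

theorem contDiffAt_verticalDeriv {F : B × V → B × V} {z : B × V} (hF : ContDiffAt ℝ ∞ F z) :
    ContDiffAt ℝ ∞ (verticalDeriv F) z :=
  contDiffAt_const.clm_comp ((hF.fderiv_right (by simp)).clm_comp contDiffAt_const)

theorem injective_verticalDeriv {F : B × V → B × V} {z : B × V}
    (hF : Function.Injective (bracketFrame F z)) : Function.Injective (verticalDeriv F z) := by
  refine (injective_iff_map_eq_zero _).2 fun β hβ => ?_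
  have hzero : bracketFrame F z ((fderiv ℝ F z (0, β)).2, β) = 0 :=
    Prod.ext (by simpa [bracketFrame_apply, verticalDeriv] using hβ) (by simp [bracketFrame_apply])
  exact congrArg Prod.snd (hF (hzero.trans (map_zero _).symm))

theorem contDiffAt_straightening {t : B × V → Q} {F : B × V → B × V} {z : B × V}
    (ht : ContDiffAt ℝ ∞ t z) (hF : ContDiffAt ℝ ∞ F z) (π : B →L[ℝ] V) :
    ContDiffAt ℝ ∞ (straightening t π F) z :=
  ht.prodMk ((π.contDiff.contDiffAt.comp z contDiffAt_fst).prodMk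
    (π.contDiff.contDiffAt.comp z hF.fst))

theorem fderiv_straightening {t : B × V → Q} {F : B × V → B × V} {z : B × V}
    (ht : DifferentiableAt ℝ t z) (hF : DifferentiableAt ℝ F z) (π : B →L[ℝ] V) (δ : B × V) :
    fderiv ℝ (straightening t π F) z δ = (fderiv ℝ t z δ, π δ.1, π (fderiv ℝ F z δ).1) := by
  have h : HasFDerivAt (straightening t π F) _ z := ht.hasFDerivAt.prodMk
    ((π.hasFDerivAt.comp z hasFDerivAt_fst).prodMk (π.hasFDerivAt.comp z hF.hasFDerivAt.fst))
  rw [h.fderiv]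
  rfl

section Distribution

variable {t : B × V → Q} {F : B × V → B × V} {z : B × V} {π : B →L[ℝ] V}

theorem fderiv_straightening_bracketFrame (ht : DifferentiableAt ℝ t z)
    (hF : DifferentiableAt ℝ F z) (htker : ∀ δ, fderiv ℝ t z δ = 0 ↔ δ ∈ range (bracketFrame F z))
    (α β : V) :
    ∃ c, fderiv ℝ (straightening t π F) z (bracketFrame F z (α, β)) =
      (0, -(π ∘L verticalDeriv F z) β, c) :=
  ⟨_, (fderiv_straightening ht hF π _).trans (Prod.ext ((htker _).2 (mem_range_self _))
    (Prod.ext (by simp [bracketFrame_apply, verticalDeriv]) rfl))⟩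

theorem fderiv_straightening_vertical (ht : DifferentiableAt ℝ t z)
    (hF : DifferentiableAt ℝ F z) (htker : ∀ δ, fderiv ℝ t z δ = 0 ↔ δ ∈ range (bracketFrame F z))
    (v : V) :
    fderiv ℝ (straightening t π F) z (0, v) = (0, 0, (π ∘L verticalDeriv F z) v) := by
  have hv : (0, v) ∈ range (bracketFrame F z) := ⟨(v, 0), bracketFrame_mk_zero F z v⟩
  rw [fderiv_straightening ht hF, (htker _).2 hv, map_zero]
  rfl

theorem injective_fderiv_straightening (ht : DifferentiableAt ℝ t z) (hF : DifferentiableAt ℝ F z)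
    (htker : ∀ δ, fderiv ℝ t z δ = 0 ↔ δ ∈ range (bracketFrame F z))
    (hπ : Function.Injective (π ∘L verticalDeriv F z)) :
    Function.Injective (fderiv ℝ (straightening t π F) z) := by
  refine (injective_iff_map_eq_zero _).2 fun δ hδ => ?_
  have htδ : fderiv ℝ t z δ = 0 :=
    congrArg Prod.fst ((fderiv_straightening ht hF π δ).symm.trans hδ)
  obtain ⟨⟨α, β⟩, rfl⟩ := (htker δ).1 htδ
  obtain ⟨c, hc⟩ := fderiv_straightening_bracketFrame (π := π) ht hF htker α β
  have hβ : β = 0 := (hπ.eq_iff' (map_zero _)).1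
    (neg_eq_zero.1 (congrArg (fun w => w.2.1) (hc.symm.trans hδ)))
  have hvertical : bracketFrame F z (α, β) = (0, α) := by rw [hβ, bracketFrame_mk_zero]
  rw [hvertical, fderiv_straightening_vertical ht hF htker] at hδ
  have hα : α = 0 := (hπ.eq_iff' (map_zero _)).1 (congrArg (fun w => w.2.2) hδ)
  rw [hvertical, hα, Prod.mk_zero_zero]

theorem lieBracket_vertical {a : B × V → V} (ha : DifferentiableAt ℝ a z) :
    lieBracket ℝ F (fun x => (0, a x)) z = bracketFrame F z (fderiv ℝ a z (F z), a z) := by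
  have hvertical : HasFDerivAt (fun x => ((0, a x) : B × V)) _ z :=
    (hasFDerivAt_const (0 : B) z).prodMk ha.hasFDerivAt
  rw [lieBracket, hvertical.fderiv]
  rfl

end Distribution

end Straightening

section NormalForm

variable {B V : Type u} {Q : Type*} [NormedAddCommGroup B] [NormedSpace ℝ B]
  [FiniteDimensional ℝ B] [NormedAddCommGroup V] [NormedSpace ℝ V] [FiniteDimensional ℝ V]
  [NormedAddCommGroup Q] [NormedSpace ℝ Q] [FiniteDimensional ℝ Q]

theorem exists_isSmoothDiffeo_eq_straightening {F : B × V → B × V} {z₀ : B × V}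
    {U : Set (B × V)} (hU : U ∈ 𝓝 z₀) (hF : ∀ᶠ z in 𝓝 z₀, ContDiffAt ℝ ∞ F z)
    (hinj : Function.Injective (bracketFrame F z₀))
    (hinvolutive : ∀ᶠ z in 𝓝 z₀, IsInvolutiveAt (bracketFrame F) z)
    (hdim : Module.finrank ℝ Q + Module.finrank ℝ V = Module.finrank ℝ B) :
    ∃ (t : B × V → Q) (π : B →L[ℝ] V) (e : OpenPartialHomeomorph (B × V) (Q × V × V)),
      IsSmoothDiffeo e ∧ e = straightening t π F ∧ z₀ ∈ e.source ∧ e.source ⊆ U ∧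
      ∀ z ∈ e.source, (DifferentiableAt ℝ t z ∧ DifferentiableAt ℝ F z ∧
        ∀ δ, fderiv ℝ t z δ = 0 ↔ δ ∈ range (bracketFrame F z)) ∧
        (π ∘L verticalDeriv F z).IsInvertible ∧
        ContDiffAt ℝ ∞ (fun x => (π ∘L verticalDeriv F x).inverse) z := by
  obtain ⟨L, hL⟩ := exists_continuousLinearEquiv_extending (K := Q) hinj
    (by simp only [Module.finrank_prod]; omega)
  obtain ⟨t, ht⟩ := exists_firstIntegrals_of_isInvolutiveAt
    (hF.mono fun _ => contDiffAt_bracketFrame) hinvolutive L hL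
  obtain ⟨π, hπ⟩ := ContinuousLinearMap.HasLeftInverse.of_injective_of_finiteDimensional
    (injective_verticalDeriv hinj)
  have hM := eventually_isInvertible_and_contDiffAt_inverse (M := fun z => π ∘L verticalDeriv F z)
    (hF.mono fun _ hz => contDiffAt_const.clm_comp (contDiffAt_verticalDeriv hz))
    ⟨ContinuousLinearEquiv.refl ℝ V, ContinuousLinearMap.ext fun v => (hπ v).symm⟩
  have hfderiv : (fderiv ℝ (straightening t π F) z₀).IsInvertible := by
    obtain ⟨ht₀, htker⟩ := ht.self_of_nhds
    have hinj₀ := injective_fderiv_straightening (ht₀.differentiableAt (by simp))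
      (hF.self_of_nhds.differentiableAt (by simp)) htker hM.self_of_nhds.1.injective
    exact ⟨(LinearEquiv.ofInjectiveOfFinrankEq _ hinj₀
      (by simp only [Module.finrank_prod]; omega)).toContinuousLinearEquiv, rfl⟩
  obtain ⟨e, he, hcoe, hmem, hsub⟩ := exists_isSmoothDiffeo_of_isInvertible_fderiv
    (inter_mem hU (ht.and (hF.and hM)))
    (by filter_upwards [ht, hF] with z htz hFz using contDiffAt_straightening htz.1 hFz π) hfderiv
  refine ⟨t, π, e, he, hcoe, hmem, fun z hz => (hsub hz).1, fun z hz => ?_⟩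
  obtain ⟨-, ⟨htz, htker⟩, hFz, hMz⟩ := hsub hz
  exact ⟨⟨htz.differentiableAt (by simp), hFz.differentiableAt (by simp), htker⟩, hMz⟩

theorem exists_normalForm_of_isInvolutiveAt {F : B × V → B × V} {z₀ : B × V}
    {U : Set (B × V)} (hU : U ∈ 𝓝 z₀) (hF : ∀ᶠ z in 𝓝 z₀, ContDiffAt ℝ ∞ F z)
    (hinj : Function.Injective (bracketFrame F z₀))
    (hinvolutive : ∀ᶠ z in 𝓝 z₀, IsInvolutiveAt (bracketFrame F) z)
    (hdim : Module.finrank ℝ Q + Module.finrank ℝ V = Module.finrank ℝ B) :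
    ∃ e : OpenPartialHomeomorph (B × V) (Q × V × V), IsSmoothDiffeo e ∧
      z₀ ∈ e.source ∧ e.source ⊆ U ∧
      ∃ R : B × V → V →L[ℝ] V, ∀ z ∈ e.source, (R z).IsInvertible ∧ ContDiffAt ℝ ∞ R z ∧
        (∀ v w, lieBracket ℝ (fun x => (0, R x v)) (fun x => (0, R x w)) z = 0) ∧
        ∀ v, fderiv ℝ e z (0, R z v) = (0, 0, v) ∧
          ∃ c, fderiv ℝ e z (lieBracket ℝ F (fun x => (0, R x v)) z) = (0, -v, c) := by
  obtain ⟨t, π, e, he, hcoe, hmem, hsub, hsource⟩ :=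
    exists_isSmoothDiffeo_eq_straightening (Q := Q) hU hF hinj hinvolutive hdim
  let R : B × V → V →L[ℝ] V := fun z => (π ∘L verticalDeriv F z).inverse
  have hRv : ∀ z ∈ e.source, ∀ v, DifferentiableAt ℝ (fun x => R x v) z := fun z hz v =>
    ((hsource z hz).2.2.differentiableAt (by simp)).clm_apply (differentiableAt_const v)
  have hframe : ∀ z ∈ e.source, ∀ v, fderiv ℝ e z (0, R z v) = (0, 0, v) := fun z hz v => by
    obtain ⟨⟨ht, hFz, htker⟩, hM, -⟩ := hsource z hz
    rw [hcoe, fderiv_straightening_vertical ht hFz htker, hM.self_apply_inverse]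
  refine ⟨e, he, hmem, hsub, R, fun z hz => ?_⟩
  obtain ⟨⟨ht, hFz, htker⟩, hM, hR⟩ := hsource z hz
  refine ⟨hM.inverse, hR, fun v w => ?_, fun v => ⟨hframe z hz v, ?_⟩⟩
  · exact he.lieBracket_eq_zero hz ((differentiableAt_const 0).prodMk (hRv z hz v))
      ((differentiableAt_const 0).prodMk (hRv z hz w)) (fun x hx => hframe x hx v)
      fun x hx => hframe x hx w
  · obtain ⟨c, hc⟩ := fderiv_straightening_bracketFrame (π := π) ht hFz htker
      (fderiv ℝ (fun x => R x v) z (F z)) (R z v)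
    exact ⟨c, by rw [lieBracket_vertical (hRv z hz v), hcoe, hc, hM.self_apply_inverse]⟩

end NormalForm

section Coordinates

theorem isInvolutiveAt_of_basis {E H ι : Type*} [NormedAddCommGroup E] [NormedSpace ℝ E]
    [NormedAddCommGroup H] [NormedSpace ℝ H] (b : Module.Basis ι ℝ H) {T : E → H →L[ℝ] E} {z : E}
    (hT : DifferentiableAt ℝ T z)
    (hb : ∀ i j, lieBracket ℝ (fun x => T x (b i)) (fun x => T x (b j)) z ∈ range (T z)) :
    IsInvolutiveAt T z := by
  let Ω : H →L[ℝ] H →L[ℝ] E := fderiv ℝ T z ∘L T z - (fderiv ℝ T z ∘L T z).flip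
  have hΩ : ∀ v w, lieBracket ℝ (fun x => T x v) (fun x => T x w) z = Ω v w := fun v w =>
    lieBracket_clm_apply_const hT v w
  let S : Submodule ℝ E := LinearMap.range (T z : H →ₗ[ℝ] E)
  have hzero : Ω.toLinearMap₁₂.compr₂ S.mkQ = 0 := LinearMap.ext_basis b b fun i j =>
    (Submodule.Quotient.mk_eq_zero S).2 (hΩ (b i) (b j) ▸ hb i j)
  intro v w
  rw [hΩ]
  exact (Submodule.Quotient.mk_eq_zero S).1 (LinearMap.congr_fun₂ hzero v w)

theorem isUnit_of_apply_single {ι : Type*} [Fintype ι] [DecidableEq ι]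
    {R : (ι → ℝ) →L[ℝ] ι → ℝ} (hR : R.IsInvertible) :
    IsUnit (Matrix.of fun i k => R (Pi.single i 1) k) := by
  have hmatrix : (Matrix.of fun i k => R (Pi.single i 1) k) =
      (LinearMap.toMatrix' (R : (ι → ℝ) →ₗ[ℝ] ι → ℝ)).transpose :=
    Matrix.ext fun i k => by simp [LinearMap.toMatrix'_apply]
  rw [hmatrix, Matrix.isUnit_transpose, LinearMap.isUnit_toMatrix'_iff, Module.End.isUnit_iff]
  exact hR.bijective

theorem sum_smul_eVec (p n : ℕ) (a : Fin n → ℝ) : ∑ k, a k • eVec p n k = (0, a) := by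
  refine Prod.ext ?_ ?_
  · simp [eVec, Prod.fst_sum]
  · simp only [eVec, Prod.snd_sum, Prod.smul_snd]
    exact (pi_eq_sum_univ' a).symm

variable {p n : ℕ} {F : (Fin p → ℝ) × (Fin n → ℝ) → (Fin p → ℝ) × (Fin n → ℝ)}
  {z : (Fin p → ℝ) × (Fin n → ℝ)}

theorem bracketFrame_basis (F : (Fin p → ℝ) × (Fin n → ℝ) → (Fin p → ℝ) × (Fin n → ℝ))
    (z : (Fin p → ℝ) × (Fin n → ℝ)) (s : Fin n ⊕ Fin n) :
    bracketFrame F z ((Pi.basisFun ℝ (Fin n)).prod (Pi.basisFun ℝ (Fin n)) s) =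
      Sum.elim (fun i => eVec p n i) (fun i => lieB F (fun _ => eVec p n i) z) s := by
  cases s <;> simp [bracketFrame_apply, lieB, eVec, Prod.mk_zero_zero]

theorem injective_bracketFrame
    (hli : LinearIndependent ℝ
      (Sum.elim (fun i => eVec p n i) (fun i => lieB F (fun _ => eVec p n i) z))) :
    Function.Injective (bracketFrame F z) := by
  let b := (Pi.basisFun ℝ (Fin n)).prod (Pi.basisFun ℝ (Fin n))
  have hconstr : b.constr ℝ (Sum.elim (fun i => eVec p n i)
      (fun i => lieB F (fun _ => eVec p n i) z)) = (bracketFrame F z).toLinearMap :=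
    b.ext fun s => (b.constr_basis ℝ _ s).trans (bracketFrame_basis F z s).symm
  have hinj := b.injective_constr_of_linearIndependent (R₂ := ℝ) hli
  rwa [hconstr] at hinj

theorem mem_range_bracketFrame_iff {δ : (Fin p → ℝ) × (Fin n → ℝ)} :
    δ ∈ range (bracketFrame F z) ↔ δ ∈ Submodule.span ℝ (range
      (Sum.elim (fun i => eVec p n i) (fun i => lieB F (fun _ => eVec p n i) z))) := by
  let b := (Pi.basisFun ℝ (Fin n)).prod (Pi.basisFun ℝ (Fin n))
  have hspan : Submodule.span ℝ (range (Sum.elim (fun i => eVec p n i)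
      (fun i => lieB F (fun _ => eVec p n i) z))) =
      LinearMap.range (bracketFrame F z).toLinearMap := by
    rw [LinearMap.range_eq_map, ← b.span_eq, Submodule.map_span, ← range_comp]
    exact congrArg _ (congrArg _ (funext fun s => (bracketFrame_basis F z s).symm))
  rw [hspan]
  rfl

theorem isInvolutiveAt_bracketFrame (hF : ContDiffAt ℝ ∞ F z)
    (heW : ∀ i j, lieB (fun _ => eVec p n i) (lieB F fun _ => eVec p n j) z ∈ Submodule.span ℝ
      (range (Sum.elim (fun k => eVec p n k) (fun k => lieB F (fun _ => eVec p n k) z))))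
    (hWW : ∀ i j, lieB (lieB F fun _ => eVec p n i) (lieB F fun _ => eVec p n j) z ∈
      Submodule.span ℝ
        (range (Sum.elim (fun k => eVec p n k) (fun k => lieB F (fun _ => eVec p n k) z)))) :
    IsInvolutiveAt (bracketFrame F) z := by
  refine isInvolutiveAt_of_basis ((Pi.basisFun ℝ (Fin n)).prod (Pi.basisFun ℝ (Fin n)))
    ((contDiffAt_bracketFrame hF).differentiableAt (by simp)) fun i j => ?_
  simp only [bracketFrame_basis, mem_range_bracketFrame_iff]
  rcases i with i | i <;> rcases j with j | j
  · simp [lieBracket_eq]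
  · exact heW i j
  · rw [lieBracket_swap]
    exact Submodule.neg_mem _ (heW j i)
  · exact hWW i j

end Coordinates

/- Here `m = q + 2n`, so `ℝ^{m−n} = ℝ^{q+n}` (first factor of the source) and
`ℝ^{m−2n} = ℝ^q` (first factor of the target `ℝ^{m−2n} × ℝ^n × ℝ^n`). -/
theorem stmt7 (q n : ℕ)
    (U : Set ((Fin (q + n) → ℝ) × (Fin n → ℝ))) (hU : IsOpen U)
    (F : ((Fin (q + n) → ℝ) × (Fin n → ℝ)) → (Fin (q + n) → ℝ) × (Fin n → ℝ))
    (hF : ContDiffOn ℝ (⊤ : ℕ∞) F U)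
    (W : Fin n → ((Fin (q + n) → ℝ) × (Fin n → ℝ)) → (Fin (q + n) → ℝ) × (Fin n → ℝ))
    (hW : ∀ i, W i = lieB F (fun _ => eVec (q + n) n i))
    (hli : ∀ z ∈ U, LinearIndependent ℝ
      (Sum.elim (fun i : Fin n => eVec (q + n) n i) (fun i : Fin n => W i z)))
    (hinv₁ : ∀ z ∈ U, ∀ i j, lieB (fun _ => eVec (q + n) n i) (W j) z ∈
      Submodule.span ℝ (Set.range (Sum.elim (fun k : Fin n => eVec (q + n) n k)
        (fun k : Fin n => W k z))))
    (hinv₂ : ∀ z ∈ U, ∀ i j, lieB (W i) (W j) z ∈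
      Submodule.span ℝ (Set.range (Sum.elim (fun k : Fin n => eVec (q + n) n k)
        (fun k : Fin n => W k z)))) :
    ∀ z₀ ∈ U, ∃ U' : Set ((Fin (q + n) → ℝ) × (Fin n → ℝ)), U' ⊆ U ∧ IsOpen U' ∧ z₀ ∈ U' ∧
      ∃ A : ((Fin (q + n) → ℝ) × (Fin n → ℝ)) → Fin n → Fin n → ℝ,
        ContDiffOn ℝ (⊤ : ℕ∞) A U' ∧
        (∀ z ∈ U', IsUnit (Matrix.of (A z))) ∧
        (∀ i j, ∀ z ∈ U',
          lieB (fun w => ∑ k, A w i k • eVec (q + n) n k)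
               (fun w => ∑ k, A w j k • eVec (q + n) n k) z = 0) ∧
      ∃ O : Set ((Fin q → ℝ) × (Fin n → ℝ) × (Fin n → ℝ)), IsOpen O ∧
      ∃ φ : ((Fin (q + n) → ℝ) × (Fin n → ℝ)) → (Fin q → ℝ) × (Fin n → ℝ) × (Fin n → ℝ),
      ∃ ψ : ((Fin q → ℝ) × (Fin n → ℝ) × (Fin n → ℝ)) → (Fin (q + n) → ℝ) × (Fin n → ℝ),
        ContDiffOn ℝ (⊤ : ℕ∞) φ U' ∧ ContDiffOn ℝ (⊤ : ℕ∞) ψ O ∧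
        φ '' U' = O ∧ (∀ z ∈ U', ψ (φ z) = z) ∧ (∀ w ∈ O, φ (ψ w) = w) ∧
        (∀ z ∈ U', ∀ i,
          fderiv ℝ φ z ((∑ k, A z i k • eVec (q + n) n k))
            = ((0, 0, Pi.single i 1) : (Fin q → ℝ) × (Fin n → ℝ) × (Fin n → ℝ))) ∧
        (∀ z ∈ U', ∀ i,
          (fderiv ℝ φ z (lieB F (fun w => ∑ k, A w i k • eVec (q + n) n k) z)
              + ((0, Pi.single i 1, 0) : (Fin q → ℝ) × (Fin n → ℝ) × (Fin n → ℝ))).1 = 0 ∧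
          (fderiv ℝ φ z (lieB F (fun w => ∑ k, A w i k • eVec (q + n) n k) z)
              + ((0, Pi.single i 1, 0) : (Fin q → ℝ) × (Fin n → ℝ) × (Fin n → ℝ))).2.1 = 0) := by
  obtain rfl : W = fun i => lieB F (fun _ => eVec (q + n) n i) := funext hW
  intro z₀ hz₀
  have hFU : ∀ z ∈ U, ContDiffAt ℝ ∞ F z := fun z hz => hF.contDiffAt (hU.mem_nhds hz)
  have hnear : ∀ᶠ z in 𝓝 z₀, z ∈ U := hU.mem_nhds hz₀
  obtain ⟨e, he, hmem, hsub, R, hR⟩ := exists_normalForm_of_isInvolutiveAt (Q := Fin q → ℝ)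
    hnear (hnear.mono hFU) (injective_bracketFrame (hli z₀ hz₀))
    (hnear.mono fun z hz => isInvolutiveAt_bracketFrame (hFU z hz) (hinv₁ z hz) (hinv₂ z hz))
    (by simp only [Module.finrank_fin_fun])
  refine ⟨e.source, hsub, e.open_source, hmem, fun z i => R z (Pi.single i 1), fun z hz => ?_,
    fun z hz => isUnit_of_apply_single (hR z hz).1, fun i j z hz => ?_, e.target, e.open_target,
    e, e.symm, he.1, he.2, e.image_source_eq_target, fun z hz => e.left_inv hz,
    fun w hw => e.right_inv hw, fun z hz i => ?_, fun z hz i => ?_⟩ <;>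
    obtain ⟨-, hRz, hcomm, hframe⟩ := hR z hz
  · exact (contDiffAt_pi.2 fun _ => hRz.clm_apply contDiffAt_const).contDiffWithinAt
  · simp only [sum_smul_eVec]
    exact hcomm _ _
  · simpa only [sum_smul_eVec] using (hframe _).1
  · obtain ⟨c, hc⟩ := (hframe (Pi.single i 1)).2
    have hbracket : fderiv ℝ e z (lieB F (fun x => (0, R x (Pi.single i 1))) z) = _ := hc
    simp [sum_smul_eVec, hbracket]
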